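/- arXiv:1105.2474 — 2 statements merged into one kernel-verified Lean document; each statement's English description precedes it below -/
import Mathlib

section
/- Let A and B be real 3×3 matrices, let u, v ∈ ℝ³ be linearly independent, let ν = (u × v)/‖u × v‖, and let P = I₃ − ν νᵀ be the orthogonal projection onto the plane spanned by u and v. Define F(s,t) = ‖((I + sA + tB)u) × ((I + sA + tB)v)‖ for (s,t) ∈ ℝ². Then the mixed second partial derivative ∂²F/∂s∂t at (0,0) exists and equals ‖u × v‖ · ( −tr(P Bᵀ P Aᵀ) + (tr A − ⟨Aν, ν⟩)(tr B − ⟨Bν, ν⟩) + ⟨P Aᵀ ν, P Bᵀ ν⟩ ). -/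
section

open Matrix

/-- Derivative of the dot product of two vector-valued curves. -/
theorem HasDerivAt.dotProduct_pi {ι : Type*} [Fintype ι] {f g : ℝ → ι → ℝ} {f' g' : ι → ℝ} {x : ℝ}
    (hf : HasDerivAt f f' x) (hg : HasDerivAt g g' x) :
    HasDerivAt (fun y => f y ⬝ᵥ g y) (f' ⬝ᵥ g x + f x ⬝ᵥ g') x := by
  simp only [dotProduct, ← Finset.sum_add_distrib]
  exact HasDerivAt.fun_sum fun i _ => (hasDerivAt_pi.1 hf i).fun_mul (hasDerivAt_pi.1 hg i)

/-- Derivative of the Euclidean length of a nonvanishing vector-valued curve. -/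
theorem HasDerivAt.sqrt_dotProduct_self {ι : Type*} [Fintype ι] {f : ℝ → ι → ℝ} {f' : ι → ℝ}
    {x : ℝ} (hf : HasDerivAt f f' x) (hx : f x ≠ 0) :
    HasDerivAt (fun y => √(f y ⬝ᵥ f y)) (f x ⬝ᵥ f' / √(f x ⬝ᵥ f x)) x := by
  have h0 : f x ⬝ᵥ f x ≠ 0 := fun h => hx (dotProduct_self_eq_zero.1 h)
  convert (hf.dotProduct_pi hf).sqrt h0 using 1
  rw [dotProduct_comm f' (f x)]
  ring

/-- A quadratic vector-valued polynomial has its linear coefficient as derivative at zero. -/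
theorem hasDerivAt_quadratic_pi {ι : Type*} [Fintype ι] (p q r : ι → ℝ) :
    HasDerivAt (fun t : ℝ => p + t • q + t ^ 2 • r) q 0 := by
  refine hasDerivAt_pi.2 fun i => ?_
  have h := (((hasDerivAt_id (0 : ℝ)).mul_const (q i)).const_add (p i)).fun_add
    ((hasDerivAt_pow 2 (0 : ℝ)).mul_const (r i))
  simpa using h

/-- Expansion of the cross product of two vectors perturbed linearly in two parameters. -/
theorem crossProduct_perturbation (A B : Matrix (Fin 3) (Fin 3) ℝ) (u v : Fin 3 → ℝ) (s t : ℝ) :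
    crossProduct ((1 + s • A + t • B) *ᵥ u) ((1 + s • A + t • B) *ᵥ v) =
      (crossProduct u v + s • (crossProduct (A *ᵥ u) v + crossProduct u (A *ᵥ v))
          + s ^ 2 • crossProduct (A *ᵥ u) (A *ᵥ v))
        + t • ((crossProduct (B *ᵥ u) v + crossProduct u (B *ᵥ v))
          + s • (crossProduct (A *ᵥ u) (B *ᵥ v) + crossProduct (B *ᵥ u) (A *ᵥ v))
          + s ^ 2 • (0 : Fin 3 → ℝ))
        + t ^ 2 • crossProduct (B *ᵥ u) (B *ᵥ v) := by
  simp only [add_mulVec, smul_mulVec, one_mulVec, map_add, map_smul, LinearMap.add_apply,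
    LinearMap.smul_apply]
  module

/-- The first variation of the cross product is the matrix `tr A • 1 - Aᵀ` applied to it. -/
theorem crossProduct_mulVec_add (A : Matrix (Fin 3) (Fin 3) ℝ) (u v : Fin 3 → ℝ) :
    crossProduct (A *ᵥ u) v + crossProduct u (A *ᵥ v) =
      A.trace • crossProduct u v - Aᵀ *ᵥ crossProduct u v := by
  ext i
  fin_cases i <;>
    simp [cross_apply, mulVec, dotProduct, Fin.sum_univ_three, trace] <;> ring

/-- The mixed second variation of the cross product, as a polarized adjugate applied to it. -/
theorem crossProduct_mulVec_mulVec_add (A B : Matrix (Fin 3) (Fin 3) ℝ) (u v : Fin 3 → ℝ) :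
    crossProduct (A *ᵥ u) (B *ᵥ v) + crossProduct (B *ᵥ u) (A *ᵥ v) =
      (A.trace * B.trace - (A * B).trace) • crossProduct u v
        - A.trace • (Bᵀ *ᵥ crossProduct u v) - B.trace • (Aᵀ *ᵥ crossProduct u v)
        + Aᵀ *ᵥ (Bᵀ *ᵥ crossProduct u v) + Bᵀ *ᵥ (Aᵀ *ᵥ crossProduct u v) := by
  ext i
  fin_cases i <;>
    simp only [Pi.add_apply, Pi.sub_apply, Pi.smul_apply, smul_eq_mul, mulVec, dotProduct,
      Fin.sum_univ_three, transpose_apply, trace, diag_apply, mul_apply, cross_apply] <;>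
    simp <;> ring

/-- Trace of a product with two copies of `1 - ν νᵀ`. -/
theorem trace_one_sub_vecMulVec_mul (A B : Matrix (Fin 3) (Fin 3) ℝ) (ν : Fin 3 → ℝ) :
    ((1 - vecMulVec ν ν) * Bᵀ * (1 - vecMulVec ν ν) * Aᵀ).trace =
      (A * B).trace - ν ⬝ᵥ Aᵀ *ᵥ (Bᵀ *ᵥ ν) - ν ⬝ᵥ Bᵀ *ᵥ (Aᵀ *ᵥ ν)
        + (ν ⬝ᵥ Aᵀ *ᵥ ν) * (ν ⬝ᵥ Bᵀ *ᵥ ν) := by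
  have h : ((1 - vecMulVec ν ν) * Bᵀ * (1 - vecMulVec ν ν) * Aᵀ).trace =
      (Bᵀ * Aᵀ).trace - (vecMulVec ν ν * (Bᵀ * Aᵀ)).trace - (vecMulVec ν ν * (Aᵀ * Bᵀ)).trace
        + ((vecMulVec ν ν * Bᵀ) * (vecMulVec ν ν * Aᵀ)).trace := by
    have hc : (vecMulVec ν ν * (Aᵀ * Bᵀ)).trace = (Bᵀ * vecMulVec ν ν * Aᵀ).trace := by
      rw [← Matrix.mul_assoc, Matrix.trace_mul_comm, Matrix.mul_assoc]
    rw [hc, ← trace_sub, ← trace_sub, ← trace_add]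
    congr 1
    noncomm_ring
  rw [h, ← transpose_mul, trace_transpose]
  simp only [vecMulVec_mul, trace_vecMulVec, dotProduct_mulVec, vecMul_vecMul, vecMul_vecMulVec,
    transpose_mul, dotProduct_smul, smul_eq_mul, dotProduct_comm _ ν]
  ring

/-- Applying `1 - ν νᵀ` for a unit vector `ν` removes the normal component of a dot product. -/
theorem one_sub_vecMulVec_mulVec_dotProduct {ν : Fin 3 → ℝ} (hν : ν ⬝ᵥ ν = 1) (x y : Fin 3 → ℝ) :
    ((1 - vecMulVec ν ν) *ᵥ x) ⬝ᵥ ((1 - vecMulVec ν ν) *ᵥ y) =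
      x ⬝ᵥ y - (ν ⬝ᵥ x) * (ν ⬝ᵥ y) := by
  simp only [sub_mulVec, one_mulVec, vecMulVec_mulVec, sub_dotProduct, dotProduct_sub,
    op_smul_eq_smul, smul_dotProduct, dotProduct_smul, hν, smul_eq_mul,
    dotProduct_comm x ν]
  ring

end


open Matrix in
/-- Pointwise (d = 3) form of the second-order shape derivative of the surface Jacobian
at `r = 0`: the mixed second partial `∂²F/∂s∂t(0,0)` of
`F(s,t) = ‖((I+sA+tB)u) × ((I+sA+tB)v)‖` equals
`‖u×v‖ (−tr(PBᵀPAᵀ) + (trA − ⟨Aν,ν⟩)(trB − ⟨Bν,ν⟩) + ⟨PAᵀν, PBᵀν⟩)`. -/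
theorem stmt6 (A B : Matrix (Fin 3) (Fin 3) ℝ) (u v : Fin 3 → ℝ)
    (huv : LinearIndependent ℝ ![u, v])
    (ν : Fin 3 → ℝ)
    (hν : ν = (Real.sqrt (crossProduct u v ⬝ᵥ crossProduct u v))⁻¹ • crossProduct u v)
    (P : Matrix (Fin 3) (Fin 3) ℝ) (hP : P = 1 - vecMulVec ν ν)
    (F : ℝ → ℝ → ℝ)
    (hF : ∀ s t : ℝ, F s t =
      Real.sqrt
        (crossProduct ((1 + s • A + t • B).mulVec u) ((1 + s • A + t • B).mulVec v) ⬝ᵥ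
          crossProduct ((1 + s • A + t • B).mulVec u) ((1 + s • A + t • B).mulVec v))) :
    HasDerivAt (fun s : ℝ => deriv (fun t : ℝ => F s t) 0)
      (Real.sqrt (crossProduct u v ⬝ᵥ crossProduct u v) *
        (-(P * Bᵀ * P * Aᵀ).trace
          + (A.trace - A.mulVec ν ⬝ᵥ ν) * (B.trace - B.mulVec ν ⬝ᵥ ν)
          + (P * Aᵀ).mulVec ν ⬝ᵥ (P * Bᵀ).mulVec ν)) 0 := by
  have hw : crossProduct u v ≠ 0 := crossProduct_ne_zero_iff_linearIndependent.2 huv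
  have hpos : 0 < crossProduct u v ⬝ᵥ crossProduct u v :=
    lt_of_le_of_ne (Finset.sum_nonneg fun i _ => mul_self_nonneg _)
      fun h => hw (dotProduct_self_eq_zero.1 h.symm)
  set N := √(crossProduct u v ⬝ᵥ crossProduct u v) with hN
  have hN0 : N ≠ 0 := (Real.sqrt_pos.2 hpos).ne'
  have hwν : crossProduct u v = N • ν := by
    rw [hν, smul_inv_smul₀ hN0]
  have hνν : ν ⬝ᵥ ν = 1 := by
    have h : N ^ 2 = crossProduct u v ⬝ᵥ crossProduct u v := Real.sq_sqrt hpos.le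
    rw [hν, smul_dotProduct, dotProduct_smul, ← h, smul_eq_mul, smul_eq_mul]
    field_simp
  let p : ℝ → Fin 3 → ℝ := fun s =>
    crossProduct u v + s • (crossProduct (A *ᵥ u) v + crossProduct u (A *ᵥ v))
      + s ^ 2 • crossProduct (A *ᵥ u) (A *ᵥ v)
  let q : ℝ → Fin 3 → ℝ := fun s =>
    (crossProduct (B *ᵥ u) v + crossProduct u (B *ᵥ v))
      + s • (crossProduct (A *ᵥ u) (B *ᵥ v) + crossProduct (B *ᵥ u) (A *ᵥ v))
      + s ^ 2 • (0 : Fin 3 → ℝ)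
  have hp : HasDerivAt p _ 0 := hasDerivAt_quadratic_pi _ _ _
  have hq : HasDerivAt q _ 0 := hasDerivAt_quadratic_pi _ _ _
  have hp0 : p 0 = crossProduct u v := by simp [p]
  have hq0 : q 0 = crossProduct (B *ᵥ u) v + crossProduct u (B *ᵥ v) := by simp [q]
  have hpne : p 0 ≠ 0 := hp0 ▸ hw
  have hderiv : (fun s : ℝ => deriv (fun t : ℝ => F s t) 0) =ᶠ[nhds 0]
      fun s => p s ⬝ᵥ q s / √(p s ⬝ᵥ p s) := by
    filter_upwards [hp.continuousAt.eventually_ne hpne] with s hs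
    simp only [hF, crossProduct_perturbation]
    have h := (hasDerivAt_quadratic_pi (p s) (q s)
      (crossProduct (B *ᵥ u) (B *ᵥ v))).sqrt_dotProduct_self (by simpa using hs)
    simpa [p, q] using h.deriv
  have hmain := (hp.dotProduct_pi hq).fun_div (hp.sqrt_dotProduct_self hpne)
    (by rw [hp0]; exact hN0)
  refine (hmain.congr_of_eventuallyEq hderiv).congr_deriv ?_
  have hA : A *ᵥ ν ⬝ᵥ ν = ν ⬝ᵥ Aᵀ *ᵥ ν := by
    rw [mulVec_transpose, dotProduct_comm, dotProduct_mulVec, dotProduct_comm]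
  have hB : B *ᵥ ν ⬝ᵥ ν = ν ⬝ᵥ Bᵀ *ᵥ ν := by
    rw [mulVec_transpose, dotProduct_comm, dotProduct_mulVec, dotProduct_comm]
  rw [hp0, hq0, ← hN, hP, trace_one_sub_vecMulVec_mul, ← mulVec_mulVec, ← mulVec_mulVec,
    one_sub_vecMulVec_mulVec_dotProduct hνν, hA, hB, crossProduct_mulVec_add,
    crossProduct_mulVec_add, crossProduct_mulVec_mulVec_add, hwν]
  simp only [mulVec_smul, sub_dotProduct, dotProduct_sub, dotProduct_add, smul_dotProduct,
    dotProduct_smul, smul_eq_mul, hνν, dotProduct_comm (Aᵀ *ᵥ ν) ν]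
  field_simp
  ring
end

section
/- Let κ_s, κ_p ∈ ℂ \ {0}. For κ ∈ ℂ define g_κ : ℝ³ \ {0} → ℂ by g_κ(z) = exp(iκ‖z‖)/(4π‖z‖). Define the matrix-valued function E on ℝ³ \ {0} by E(z) = g_{κ_s}(z) I₃ + κ_s^{-2} H(z), where H(z) is the Hessian matrix of g_{κ_s} − g_{κ_p} at z, i.e. H(z)_{ij} = ∂_i∂_j (g_{κ_s} − g_{κ_p})(z). Then for every z ≠ 0 and every j ∈ {1,2,3}, Σ_{i=1}^{3} ∂_{z_i} E_{ij}(z) = (κ_p²/κ_s²) ∂_{z_j} g_{κ_p}(z); that is, the (column-wise) divergence of E equals (κ_p²/κ_s²) ∇g_{κ_p}. -/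
/-- The acoustic fundamental solution `g_κ(z) = e^{iκ|z|}/(4π|z|)` in ℝ³. -/
noncomputable def gker (κ : ℂ) (z : EuclideanSpace ℝ (Fin 3)) : ℂ :=
  Complex.exp (Complex.I * κ * (‖z‖ : ℂ)) / (4 * (Real.pi : ℂ) * (‖z‖ : ℂ))

/-- The Hessian matrix `H(z)_{ij} = ∂ᵢ∂ⱼ(g_{κs} − g_{κp})(z)`. -/
noncomputable def Hker (κs κp : ℂ) (z : EuclideanSpace ℝ (Fin 3)) :
    Matrix (Fin 3) (Fin 3) ℂ :=
  Matrix.of fun i j =>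
    fderiv ℝ (fun y => fderiv ℝ (fun x => gker κs x - gker κp x) y
      (EuclideanSpace.single j 1)) z (EuclideanSpace.single i 1)

/-- The (rescaled) elastodynamic fundamental solution `E(z) = g_{κs}(z) I₃ + κs⁻² H(z)`. -/
noncomputable def Eker (κs κp : ℂ) (z : EuclideanSpace ℝ (Fin 3)) :
    Matrix (Fin 3) (Fin 3) ℂ :=
  gker κs z • (1 : Matrix (Fin 3) (Fin 3) ℂ) + (κs ^ 2)⁻¹ • Hker κs κp z

/-- The radial profile `φ` with `∂ⱼ g_κ(z) = zⱼ φ(|z|)`. -/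
noncomputable def gradProfile (κ : ℂ) (r : ℝ) : ℂ :=
  Complex.exp (Complex.I * κ * r) * (Complex.I * κ * r - 1) / (4 * (Real.pi : ℂ) * r ^ 3)

/-- The radial profile `ψ` with `∂ᵢ∂ⱼ g_κ(z) = δᵢⱼ φ(|z|) + zᵢ zⱼ ψ(|z|)`. -/
noncomputable def hessProfile (κ : ℂ) (r : ℝ) : ℂ :=
  Complex.exp (Complex.I * κ * r) * (3 - 3 * (Complex.I * κ * r) - κ ^ 2 * r ^ 2) /
    (4 * (Real.pi : ℂ) * r ^ 5)

lemma hasDerivAt_cexp_mul_div_pow {κ : ℂ} {r : ℝ} (hr : r ≠ 0) {p : ℝ → ℂ} {p' : ℂ}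
    (hp : HasDerivAt p p' r) (n : ℕ) :
    HasDerivAt
      (fun t : ℝ => Complex.exp (Complex.I * κ * t) * p t / (4 * (Real.pi : ℂ) * t ^ n))
      (Complex.exp (Complex.I * κ * r) *
        (Complex.I * κ * r * p r + r * p' - n * p r) / (4 * (Real.pi : ℂ) * r ^ (n + 1))) r := by
  have hr' : (r : ℂ) ≠ 0 := by exact_mod_cast hr
  have hpi : (Real.pi : ℂ) ≠ 0 := by exact_mod_cast Real.pi_ne_zero
  have hid : HasDerivAt (fun t : ℝ => (t : ℂ)) 1 r := Complex.ofRealCLM.hasDerivAt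
  have hden := (hid.pow n).const_mul (4 * (Real.pi : ℂ))
  refine (((hid.const_mul (Complex.I * κ)).cexp.mul hp).div hden
    (by simp [hr, hpi])).congr_deriv ?_
  cases n with
  | zero => simp; field_simp
  | succ n =>
    simp only [Pi.mul_apply, Pi.pow_apply, Nat.add_sub_cancel]
    field_simp
    ring

lemma hasDerivAt_gker_profile (κ : ℂ) {r : ℝ} (hr : r ≠ 0) :
    HasDerivAt
      (fun t : ℝ => Complex.exp (Complex.I * κ * t) / (4 * (Real.pi : ℂ) * t))
      (r * gradProfile κ r) r := by
  have hr' : (r : ℂ) ≠ 0 := by exact_mod_cast hr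
  convert hasDerivAt_cexp_mul_div_pow (κ := κ) hr (hasDerivAt_const r (1 : ℂ)) 1 using 1
  · simp
  · rw [gradProfile]
    field_simp
    simp
    ring

lemma hasDerivAt_gradProfile (κ : ℂ) {r : ℝ} (hr : r ≠ 0) :
    HasDerivAt (gradProfile κ) (r * hessProfile κ r) r := by
  have hr' : (r : ℂ) ≠ 0 := by exact_mod_cast hr
  have hid : HasDerivAt (fun t : ℝ => (t : ℂ)) 1 r := Complex.ofRealCLM.hasDerivAt
  refine (hasDerivAt_cexp_mul_div_pow (κ := κ) hr
    ((hid.const_mul (Complex.I * κ)).sub_const 1) 3).congr_deriv ?_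
  rw [hessProfile]
  field_simp
  push_cast
  linear_combination (κ ^ 2 * r ^ 6) * Complex.I_sq

/-- The Helmholtz equation for `∂ⱼ g_κ`, expressed through the radial profiles. -/
lemma hasDerivAt_hessProfile (κ : ℂ) {r : ℝ} (hr : r ≠ 0) :
    HasDerivAt (hessProfile κ)
      (r * (-(κ ^ 2 * gradProfile κ r + 5 * hessProfile κ r) / r ^ 2)) r := by
  have hr' : (r : ℂ) ≠ 0 := by exact_mod_cast hr
  have hid : HasDerivAt (fun t : ℝ => (t : ℂ)) 1 r := Complex.ofRealCLM.hasDerivAt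
  refine (hasDerivAt_cexp_mul_div_pow (κ := κ) hr
    ((((hid.const_mul (Complex.I * κ)).const_mul 3).const_sub 3).sub
      ((hid.pow 2).const_mul (κ ^ 2))) 5).congr_deriv ?_
  rw [hessProfile, gradProfile]
  simp only [Pi.sub_apply, Pi.pow_apply]
  field_simp
  push_cast
  linear_combination (-3 * κ ^ 2 * r ^ 8) * Complex.I_sq

lemma hasFDerivAt_radial {E : Type*} [NormedAddCommGroup E] [InnerProductSpace ℝ E]
    {f : ℝ → ℂ} {c : ℂ} {z : E} (hz : z ≠ 0) (hf : HasDerivAt f (‖z‖ * c) ‖z‖) :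
    HasFDerivAt (fun y => f ‖y‖) ((innerSL ℝ z).smulRight c) z := by
  have hz' : ‖z‖ ≠ 0 := norm_ne_zero_iff.2 hz
  have hn : HasFDerivAt (fun y : E => ‖y‖) (‖z‖⁻¹ • innerSL ℝ z) z := by
    have h := (hasStrictFDerivAt_norm_sq z).hasFDerivAt.sqrt (by positivity)
    simp only [Real.sqrt_sq (norm_nonneg _)] at h
    convert h using 1
    ext v
    simp
    field_simp
  refine (hf.hasFDerivAt.comp z hn).congr_fderiv ?_
  ext v
  have : (‖z‖ : ℂ) ≠ 0 := by exact_mod_cast hz'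
  simp
  field_simp

lemma hasFDerivAt_gker (κ : ℂ) {z : EuclideanSpace ℝ (Fin 3)} (hz : z ≠ 0) :
    HasFDerivAt (gker κ) ((innerSL ℝ z).smulRight (gradProfile κ ‖z‖)) z :=
  hasFDerivAt_radial hz (hasDerivAt_gker_profile κ (norm_ne_zero_iff.2 hz))

lemma hasFDerivAt_gradProfile_norm (κ : ℂ) {z : EuclideanSpace ℝ (Fin 3)} (hz : z ≠ 0) :
    HasFDerivAt (fun y : EuclideanSpace ℝ (Fin 3) => gradProfile κ ‖y‖)
      ((innerSL ℝ z).smulRight (hessProfile κ ‖z‖)) z :=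
  hasFDerivAt_radial hz (hasDerivAt_gradProfile κ (norm_ne_zero_iff.2 hz))

lemma hasFDerivAt_hessProfile_norm (κ : ℂ) {z : EuclideanSpace ℝ (Fin 3)} (hz : z ≠ 0) :
    HasFDerivAt (fun y : EuclideanSpace ℝ (Fin 3) => hessProfile κ ‖y‖)
      ((innerSL ℝ z).smulRight
        (-(κ ^ 2 * gradProfile κ ‖z‖ + 5 * hessProfile κ ‖z‖) / (‖z‖ : ℂ) ^ 2)) z :=
  hasFDerivAt_radial hz (by
    simpa using hasDerivAt_hessProfile κ (norm_ne_zero_iff.2 hz))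

lemma hasFDerivAt_ofReal_coord (z : EuclideanSpace ℝ (Fin 3)) (j : Fin 3) :
    HasFDerivAt (fun y : EuclideanSpace ℝ (Fin 3) => (y j : ℂ))
      (Complex.ofRealCLM.comp (EuclideanSpace.proj j)) z :=
  (Complex.ofRealCLM.comp (EuclideanSpace.proj (𝕜 := ℝ) j)).hasFDerivAt

/-- The Hessian of `g_κ` away from the origin. -/
noncomputable def hessEntry (κ : ℂ) (i j : Fin 3) (z : EuclideanSpace ℝ (Fin 3)) : ℂ :=
  (if i = j then 1 else 0) * gradProfile κ ‖z‖ + z i * z j * hessProfile κ ‖z‖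

lemma fderiv_gker_single (κ : ℂ) {z : EuclideanSpace ℝ (Fin 3)} (hz : z ≠ 0) (j : Fin 3) :
    fderiv ℝ (gker κ) z (EuclideanSpace.single j 1) = z j * gradProfile κ ‖z‖ := by
  simp [(hasFDerivAt_gker κ hz).fderiv, EuclideanSpace.inner_single_right]

lemma Hker_apply (κs κp : ℂ) {z : EuclideanSpace ℝ (Fin 3)} (hz : z ≠ 0) (i j : Fin 3) :
    Hker κs κp z i j = hessEntry κs i j z - hessEntry κp i j z := by
  have hev : (fun y => fderiv ℝ (fun x => gker κs x - gker κp x) y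
      (EuclideanSpace.single j 1)) =ᶠ[nhds z]
      fun y => (y j : ℂ) * (gradProfile κs ‖y‖ - gradProfile κp ‖y‖) := by
    filter_upwards [isOpen_ne.mem_nhds hz] with y hy
    rw [fderiv_fun_sub (hasFDerivAt_gker κs hy).differentiableAt
      (hasFDerivAt_gker κp hy).differentiableAt, sub_apply,
      fderiv_gker_single κs hy, fderiv_gker_single κp hy]
    ring
  have h := (hasFDerivAt_ofReal_coord z j).mul
    ((hasFDerivAt_gradProfile_norm κs hz).sub (hasFDerivAt_gradProfile_norm κp hz))
  rw [Hker, Matrix.of_apply, hev.fderiv_eq]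
  erw [h.fderiv]
  by_cases hij : i = j
  · subst hij
    simp [hessEntry, EuclideanSpace.inner_single_right]
    ring
  · simp [hessEntry, EuclideanSpace.inner_single_right, hij, Ne.symm hij]
    ring

lemma differentiableAt_hessEntry (κ : ℂ) {z : EuclideanSpace ℝ (Fin 3)} (hz : z ≠ 0)
    (i j : Fin 3) : DifferentiableAt ℝ (hessEntry κ i j) z :=
  ((hasFDerivAt_gradProfile_norm κ hz).differentiableAt.const_mul _).add
    (((hasFDerivAt_ofReal_coord z i).differentiableAt.mul
      (hasFDerivAt_ofReal_coord z j).differentiableAt).mul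
      (hasFDerivAt_hessProfile_norm κ hz).differentiableAt)

/-- The divergence of the Hessian of `g_κ` is `-κ² ∇ g_κ`. -/
lemma sum_fderiv_hessEntry (κ : ℂ) {z : EuclideanSpace ℝ (Fin 3)} (hz : z ≠ 0) (j : Fin 3) :
    ∑ i : Fin 3, fderiv ℝ (hessEntry κ i j) z (EuclideanSpace.single i 1) =
      -κ ^ 2 * (z j * gradProfile κ ‖z‖) := by
  set χ : ℂ := -(κ ^ 2 * gradProfile κ ‖z‖ + 5 * hessProfile κ ‖z‖) / (‖z‖ : ℂ) ^ 2 with hχ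
  have hz' : (‖z‖ : ℂ) ≠ 0 := by exact_mod_cast norm_ne_zero_iff.2 hz
  have hentry (i : Fin 3) : fderiv ℝ (hessEntry κ i j) z (EuclideanSpace.single i 1) =
      (if i = j then 2 * (z j * hessProfile κ ‖z‖) else 0) + z j * hessProfile κ ‖z‖ +
        (z i : ℂ) ^ 2 * (z j * χ) := by
    have h := ((hasFDerivAt_gradProfile_norm κ hz).const_mul (if i = j then 1 else 0)).add
      (((hasFDerivAt_ofReal_coord z i).mul (hasFDerivAt_ofReal_coord z j)).mul
        (hasFDerivAt_hessProfile_norm κ hz))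
    have h' : HasFDerivAt (hessEntry κ i j) _ z := h
    rw [h'.fderiv, ← hχ]
    by_cases hij : i = j
    · subst hij
      simp [EuclideanSpace.inner_single_right]
      ring
    · simp [EuclideanSpace.inner_single_right, hij, Ne.symm hij]
      ring
  have hnorm : ∑ i : Fin 3, (z i : ℂ) ^ 2 = (‖z‖ : ℂ) ^ 2 := by
    exact_mod_cast (EuclideanSpace.real_norm_sq_eq z).symm
  simp only [hentry, Finset.sum_add_distrib, ← Finset.sum_mul, hnorm, hχ]
  simp
  field_simp
  ring

/-- Identity from Example (Tk) of the paper: the column-wise divergence of the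
elastodynamic fundamental solution equals `(κp²/κs²) ∇ g_{κp}`. -/
theorem stmt12 (κs κp : ℂ) (hκs : κs ≠ 0) (hκp : κp ≠ 0)
    (z : EuclideanSpace ℝ (Fin 3)) (hz : z ≠ 0) (j : Fin 3) :
    ∑ i : Fin 3, fderiv ℝ (fun y => Eker κs κp y i j) z (EuclideanSpace.single i 1) =
      (κp ^ 2 / κs ^ 2) * fderiv ℝ (gker κp) z (EuclideanSpace.single j 1) := by
  have hentry (i : Fin 3) :
      fderiv ℝ (fun y => Eker κs κp y i j) z (EuclideanSpace.single i 1) =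
        (if i = j then z j * gradProfile κs ‖z‖ else 0) + (κs ^ 2)⁻¹ *
          (fderiv ℝ (hessEntry κs i j) z (EuclideanSpace.single i 1) -
            fderiv ℝ (hessEntry κp i j) z (EuclideanSpace.single i 1)) := by
    have hev : (fun y => Eker κs κp y i j) =ᶠ[nhds z] fun y =>
        (if i = j then 1 else 0) * gker κs y +
          (κs ^ 2)⁻¹ * (hessEntry κs i j y - hessEntry κp i j y) := by
      filter_upwards [isOpen_ne.mem_nhds hz] with y hy
      simp [Eker, Hker_apply κs κp hy, Matrix.one_apply]
    have h := ((hasFDerivAt_gker κs hz).const_mul (if i = j then 1 else 0)).add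
      (((differentiableAt_hessEntry κs hz i j).hasFDerivAt.sub
        (differentiableAt_hessEntry κp hz i j).hasFDerivAt).const_mul (κs ^ 2)⁻¹)
    rw [(h.congr_of_eventuallyEq hev).fderiv]
    by_cases hij : i = j
    · subst hij
      simp [EuclideanSpace.inner_single_right]
    · simp [hij]
  simp only [hentry, Finset.sum_add_distrib, ← Finset.mul_sum, Finset.sum_sub_distrib,
    sum_fderiv_hessEntry _ hz, fderiv_gker_single κp hz]
  simp
  field_simp
  ring
end
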